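/- arXiv:2307.06453 — 2 statements merged into one kernel-verified Lean document; each statement's English description precedes it below -/
import Mathlib

section
/- Let (d_n) and (ε_n) be sequences such that ε_n → 0 and d*_n := min(d_n, n − d_n) → ∞. Then for every δ > 0, with high probability D ~ 𝔻(n, d_n/n) has the property that for every bisection c : V(D) → {1,2}, there are at most δn vertices v with 0 < def(v;c) ≤ ε_n·√(d*_n). -/
open MeasureTheory Filter

/-- Bernoulli measure on `Bool` with parameter `p`. -/
noncomputable def bernoulliM (p : ℝ) : Measure Bool :=
  (Real.toNNReal p) • Measure.dirac true + (Real.toNNReal (1 - p)) • Measure.dirac false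

instance (p : ℝ) : IsFiniteMeasure (bernoulliM p) := by
  unfold bernoulliM; infer_instance

/-- The binomial random digraph measure `𝔻(n,p)`: each of the `n(n-1)` possible arcs
(ordered pairs of distinct vertices) is present independently with probability `p`
(the diagonal entries of the matrix are ignored, via `DiAdj`). -/
noncomputable def diMeasure (n : ℕ) (p : ℝ) : Measure (Fin n → Fin n → Bool) :=
  Measure.pi fun _ => Measure.pi fun _ => bernoulliM p

/-- The arc relation of the digraph encoded by the matrix `A`. -/
def DiAdj {n : ℕ} (A : Fin n → Fin n → Bool) (v w : Fin n) : Prop :=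
  v ≠ w ∧ A v w = true

/-- A vertex `v` is *majority-coloured* with respect to the colouring `c` if at most
half of its out-neighbours have the same colour as `v`. -/
def MajorityAt {n : ℕ} {α : Type*} (A : Fin n → Fin n → Bool) (c : Fin n → α) (v : Fin n) :
    Prop :=
  2 * ({w | DiAdj A v w ∧ c w = c v} : Set (Fin n)).ncard ≤
    ({w | DiAdj A v w} : Set (Fin n)).ncard

/-- A red-blue colouring of `Fin n` is a *bisection* if its two colour classes
differ in size by at most 1. -/
def IsBisection {n : ℕ} (c : Fin n → Bool) : Prop :=
  |(({v | c v = true} : Set (Fin n)).ncard : ℤ) -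
    (({v | c v = false} : Set (Fin n)).ncard : ℤ)| ≤ 1

open Classical in
/-- The defect of a vertex `v` w.r.t. a 2-colouring `c`: zero if `v` is
majority-coloured, and otherwise the number of same-coloured out-neighbours minus the
number of oppositely-coloured out-neighbours. -/
noncomputable def defectAt {n : ℕ} (A : Fin n → Fin n → Bool) (c : Fin n → Bool)
    (v : Fin n) : ℤ :=
  if MajorityAt A c v then 0
  else (({w | DiAdj A v w ∧ c w = c v} : Set (Fin n)).ncard : ℤ) -
    (({w | DiAdj A v w ∧ c w ≠ c v} : Set (Fin n)).ncard : ℤ)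

/-!
Write `D = min d (n - d)`. For a fixed colouring, the defect of `v` is, when positive, a signed sum
of the independent arc indicators in row `v`. Fourier inversion bounds the probability that such a
sum equals a given integer by `O(1 / √D)`, hence the probability that it lies in `(0, ε √D]` by
`2 ε`. The rows are independent, so a fixed set of `m` vertices has all its defects in this
range with probability at most `(2 ε) ^ m`. There are at most `2 ^ n` such sets and `2 ^ n`
colourings; for `m ≥ δ n` and `2 ε = (1 / 8) ^ (1 / δ)` the union bound is `4 ^ n / 8 ^ n → 0`.
-/

open scoped Finset Real

section Anticoncentration

theorem integral_exp_mul_intCast_mul_I (m : ℤ) :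
    ∫ t in -π..π, Complex.exp (t * m * Complex.I) = if m = 0 then (2 * π : ℂ) else 0 := by
  split_ifs with hm
  · simp [hm, two_mul]
  · have mul_I_ne_zero : (m * Complex.I : ℂ) ≠ 0 := by simp [hm]
    simp_rw [mul_assoc, mul_comm _ (m * Complex.I)]
    rw [integral_exp_mul_complex mul_I_ne_zero, div_eq_zero_iff, sub_eq_zero,
      Complex.exp_eq_exp_iff_exists_int]
    exact .inl ⟨m, by push_cast; ring⟩

variable {Ω : Type*} [MeasurableSpace Ω] {μ : Measure Ω} [IsFiniteMeasure μ] {X : Ω → ℤ}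

theorem two_pi_mul_measureReal_eq_integral_exp (hX : Measurable X) (k : ℤ) :
    (2 * π * μ.real {ω | X ω = k} : ℂ) =
      ∫ t in -π..π, ∫ ω, Complex.exp (t * (X ω - k : ℤ) * Complex.I) ∂μ := by
  have : Measurable fun ω => ((X ω - k : ℤ) : ℂ) :=
    (Measurable.of_discrete (f := fun j : ℤ => ((j - k : ℤ) : ℂ))).comp hX
  have integrable : Integrable
      (Function.uncurry fun (t : ℝ) ω => Complex.exp (t * (X ω - k : ℤ) * Complex.I))
      ((volume.restrict (Set.uIoc (-π) π)).prod μ) := by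
    rw [Set.uIoc_of_le (by linarith [Real.pi_pos])]
    refine Integrable.of_bound (C := 1) (Measurable.aestronglyMeasurable (by fun_prop))
      (.of_forall fun ⟨t, ω⟩ => ?_)
    exact_mod_cast (Complex.norm_exp_ofReal_mul_I (t * (X ω - k : ℤ))).le
  have indicator : ∀ ω, (if X ω - k = 0 then (2 * π : ℂ) else 0) =
      {ω | X ω = k}.indicator (fun _ => (2 * π : ℂ)) ω := by
    simp [Set.indicator_apply, sub_eq_zero]
  rw [intervalIntegral_integral_swap integrable]
  simp_rw [integral_exp_mul_intCast_mul_I, indicator]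
  rw [integral_indicator_const (μ := μ) (s := {ω | X ω = k}) _ (hX (measurableSet_singleton k)),
    Complex.real_smul, mul_comm]

theorem measureReal_eq_le_sqrt_of_norm_integral_exp_le {b : ℝ} (hb : 0 < b) (hX : Measurable X)
    (h : ∀ t : ℝ, |t| ≤ π →
      ‖∫ ω, Complex.exp (t * X ω * Complex.I) ∂μ‖ ≤ Real.exp (-b * t ^ 2)) (k : ℤ) :
    μ.real {ω | X ω = k} ≤ √(1 / (4 * π * b)) := by
  have norm_shift (t : ℝ) : ‖∫ ω, Complex.exp (t * (X ω - k : ℤ) * Complex.I) ∂μ‖ =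
      ‖∫ ω, Complex.exp (t * X ω * Complex.I) ∂μ‖ := by
    have factor (ω : Ω) : Complex.exp (t * (X ω - k : ℤ) * Complex.I) =
        Complex.exp ((-(t * k) : ℝ) * Complex.I) * Complex.exp (t * X ω * Complex.I) := by
      rw [← Complex.exp_add]
      push_cast
      ring_nf
    simp_rw [factor]
    rw [integral_const_mul, norm_mul, Complex.norm_exp_ofReal_mul_I, one_mul]
  have two_pi_mul_le : 2 * π * μ.real {ω | X ω = k} ≤ √(π / b) := calc
    2 * π * μ.real {ω | X ω = k} = ‖(2 * π * μ.real {ω | X ω = k} : ℂ)‖ := by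
      simp [abs_of_pos Real.pi_pos, abs_of_nonneg measureReal_nonneg]
    _ ≤ ∫ t in -π..π, Real.exp (-b * t ^ 2) := by
      rw [two_pi_mul_measureReal_eq_integral_exp hX]
      refine intervalIntegral.norm_integral_le_of_norm_le (by linarith [Real.pi_pos])
        (.of_forall fun t ht => ?_) (Continuous.intervalIntegrable (by fun_prop) _ _)
      exact (norm_shift t).trans_le (h t (abs_le.2 ⟨ht.1.le, ht.2⟩))
    _ ≤ ∫ t, Real.exp (-b * t ^ 2) := by
      rw [intervalIntegral.integral_of_le (by linarith [Real.pi_pos])]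
      exact setIntegral_le_integral (integrable_exp_neg_mul_sq hb)
        (.of_forall fun t => (Real.exp_pos _).le)
    _ = √(π / b) := integral_gaussian b
  refine Real.le_sqrt_of_sq_le ?_
  rw [Real.le_sqrt (by positivity) (by positivity), mul_pow] at two_pi_mul_le
  field_simp at two_pi_mul_le ⊢
  linarith

theorem measureReal_pos_and_le_le_mul {q x : ℝ} (hq : ∀ k, μ.real {ω | X ω = k} ≤ q)
    (hx : 0 ≤ x) : μ.real {ω | 0 < X ω ∧ X ω ≤ x} ≤ x * q := by
  have subset : {ω | 0 < X ω ∧ X ω ≤ x} ⊆ ⋃ k ∈ Finset.Ioc 0 ⌊x⌋, {ω | X ω = k} := by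
    intro ω hω
    simpa [Int.le_floor] using hω
  calc
    μ.real {ω | 0 < X ω ∧ X ω ≤ x} ≤ μ.real (⋃ k ∈ Finset.Ioc 0 ⌊x⌋, {ω | X ω = k}) :=
      measureReal_mono subset (measure_ne_top _ _)
    _ ≤ ∑ k ∈ Finset.Ioc 0 ⌊x⌋, μ.real {ω | X ω = k} := measureReal_biUnion_finset_le _ _
    _ ≤ ⌊x⌋₊ * q := by
      simpa [Int.floor_toNat] using
        Finset.sum_le_card_nsmul (Finset.Ioc 0 ⌊x⌋) _ q fun k _ => hq k
    _ ≤ x * q := by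
      have q_nonneg : 0 ≤ q := measureReal_nonneg.trans (hq 0)
      gcongr
      exact Nat.floor_le hx

end Anticoncentration

section Bernoulli

theorem isProbabilityMeasure_bernoulliM {p : ℝ} (hp : p ∈ Set.Icc 0 1) :
    IsProbabilityMeasure (bernoulliM p) := by
  constructor
  simp only [bernoulliM, Measure.coe_add, Measure.coe_nnreal_smul_apply, Pi.add_apply,
    measure_univ, mul_one]
  rw [← ENNReal.coe_add, ← Real.toNNReal_add hp.1 (sub_nonneg.2 hp.2)]
  simp

theorem integral_bernoulliM {E : Type*} [NormedAddCommGroup E] [NormedSpace ℝ E]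
    [CompleteSpace E] {p : ℝ} (hp : p ∈ Set.Icc 0 1) (g : Bool → E) :
    ∫ x, g x ∂bernoulliM p = p • g true + (1 - p) • g false := by
  rw [bernoulliM, integral_add_measure .of_finite .of_finite, integral_smul_nnreal_measure,
    integral_smul_nnreal_measure, integral_dirac, integral_dirac, NNReal.smul_def, NNReal.smul_def,
    Real.coe_toNNReal _ hp.1, Real.coe_toNNReal _ (sub_nonneg.2 hp.2)]

theorem normSq_mul_exp_mul_I_add (p t : ℝ) :
    Complex.normSq (p * Complex.exp (t * Complex.I) + (1 - p)) =
      1 - 2 * (p * (1 - p)) * (1 - Real.cos t) := by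
  rw [Complex.exp_mul_I, ← Complex.ofReal_cos, ← Complex.ofReal_sin, Complex.normSq_apply]
  simp only [Complex.add_re, Complex.mul_re, Complex.ofReal_re, Complex.ofReal_im, Complex.add_im,
    Complex.mul_im, Complex.I_re, Complex.I_im, Complex.sub_re, Complex.sub_im, Complex.one_re,
    Complex.one_im]
  linear_combination p ^ 2 * Real.sin_sq_add_cos_sq t

theorem norm_mul_exp_mul_I_add_le {p t : ℝ} (hp : p ∈ Set.Icc 0 1) (ht : |t| ≤ π) :
    ‖p * Complex.exp (t * Complex.I) + (1 - p)‖ ≤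
      Real.exp (-(2 / π ^ 2 * (p * (1 - p))) * t ^ 2) := by
  have variance_nonneg : 0 ≤ p * (1 - p) := mul_nonneg hp.1 (sub_nonneg.2 hp.2)
  refine (sq_le_sq₀ (norm_nonneg _) (Real.exp_pos _).le).1 ?_
  calc
    ‖p * Complex.exp (t * Complex.I) + (1 - p)‖ ^ 2
      = 1 - 2 * (p * (1 - p)) * (1 - Real.cos t) := by
      rw [← Complex.normSq_eq_norm_sq, normSq_mul_exp_mul_I_add]
    _ ≤ 1 - 2 * (p * (1 - p)) * (2 / π ^ 2 * t ^ 2) := by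
      gcongr
      linarith [Real.cos_le_one_sub_mul_cos_sq ht]
    _ = 2 * (-(2 / π ^ 2 * (p * (1 - p))) * t ^ 2) + 1 := by ring
    _ ≤ Real.exp (-(2 / π ^ 2 * (p * (1 - p))) * t ^ 2) ^ 2 := by
      rw [← Real.exp_nat_mul]
      exact_mod_cast Real.add_one_le_exp _

variable {ι : Type*} [Fintype ι]

/-- The sum of the weights `s` over the set of indices with indicator vector `f`. -/
def selectedSum (s : ι → ℤ) (f : ι → Bool) : ℤ := ∑ i, if f i then s i else 0

variable {p : ι → ℝ} {s : ι → ℤ}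

theorem integral_exp_selectedSum (hp : ∀ i, p i ∈ Set.Icc 0 1) (t : ℝ) :
    ∫ f, Complex.exp (t * selectedSum s f * Complex.I) ∂Measure.pi (fun i => bernoulliM (p i)) =
      ∏ i, (p i * Complex.exp ((t * s i : ℝ) * Complex.I) + (1 - p i)) := by
  have exp_eq_prod (f : ι → Bool) : Complex.exp (t * selectedSum s f * Complex.I) =
      ∏ i, if f i then Complex.exp ((t * s i : ℝ) * Complex.I) else 1 := by
    simp [selectedSum, Finset.mul_sum, Finset.sum_mul, Complex.exp_sum, apply_ite]
  simp_rw [exp_eq_prod]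
  rw [integral_fintype_prod_eq_prod (μ := fun i => bernoulliM (p i))
    (fun i (b : Bool) => if b then Complex.exp ((t * s i : ℝ) * Complex.I) else 1)]
  simp [integral_bernoulliM (hp _)]

theorem norm_integral_exp_selectedSum_le (hp : ∀ i, p i ∈ Set.Icc 0 1) {T : Finset ι}
    (hs : ∀ i ∈ T, |s i| = 1) {t : ℝ} (ht : |t| ≤ π) :
    ‖∫ f, Complex.exp (t * selectedSum s f * Complex.I)
        ∂Measure.pi (fun i => bernoulliM (p i))‖ ≤
      Real.exp (-(2 / π ^ 2 * ∑ i ∈ T, p i * (1 - p i)) * t ^ 2) := by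
  classical
  have norm_factor_le_one (i : ι) :
      ‖p i * Complex.exp ((t * s i : ℝ) * Complex.I) + (1 - p i)‖ ≤ 1 := by
    refine (norm_add_le _ _).trans_eq ?_
    rw [norm_mul, Complex.norm_exp_ofReal_mul_I, mul_one, ← Complex.ofReal_one,
      ← Complex.ofReal_sub, Complex.norm_of_nonneg (hp i).1,
      Complex.norm_of_nonneg (sub_nonneg.2 (hp i).2), add_sub_cancel]
  have norm_factor_le (i : ι) (hi : i ∈ T) :
      ‖p i * Complex.exp ((t * s i : ℝ) * Complex.I) + (1 - p i)‖ ≤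
        Real.exp (-(2 / π ^ 2 * (p i * (1 - p i))) * t ^ 2) := by
    have abs_s : |(s i : ℝ)| = 1 := by exact_mod_cast hs i hi
    have sq_s : (t * s i) ^ 2 = t ^ 2 := by rw [mul_pow, ← sq_abs (s i : ℝ), abs_s]; ring
    rw [← sq_s]
    exact norm_mul_exp_mul_I_add_le (hp i) (by rwa [abs_mul, abs_s, mul_one])
  rw [integral_exp_selectedSum hp, norm_prod]
  calc
    ∏ i, ‖p i * Complex.exp ((t * s i : ℝ) * Complex.I) + (1 - p i)‖
      ≤ ∏ i, if i ∈ T then Real.exp (-(2 / π ^ 2 * (p i * (1 - p i))) * t ^ 2) else 1 := by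
      refine Finset.prod_le_prod (fun _ _ => norm_nonneg _) fun i _ => ?_
      split_ifs with hi
      exacts [norm_factor_le i hi, norm_factor_le_one i]
    _ = Real.exp (-(2 / π ^ 2 * ∑ i ∈ T, p i * (1 - p i)) * t ^ 2) := by
      rw [Finset.prod_ite_mem, Finset.univ_inter, ← Real.exp_sum, ← Finset.sum_mul,
        Finset.sum_neg_distrib, Finset.mul_sum]

theorem measureReal_selectedSum_eq_le (hp : ∀ i, p i ∈ Set.Icc 0 1) {T : Finset ι}
    (hs : ∀ i ∈ T, |s i| = 1) (hT : 0 < ∑ i ∈ T, p i * (1 - p i)) (k : ℤ) :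
    (Measure.pi fun i => bernoulliM (p i)).real {f | selectedSum s f = k} ≤
      √(π / (8 * ∑ i ∈ T, p i * (1 - p i))) := by
  refine (measureReal_eq_le_sqrt_of_norm_integral_exp_le
    (b := 2 / π ^ 2 * ∑ i ∈ T, p i * (1 - p i)) (by positivity) (measurable_of_finite _)
    (fun t ht => norm_integral_exp_selectedSum_le hp hs ht) k).trans_eq ?_
  congr 1
  field_simp
  ring

end Bernoulli

section ProductMeasure

variable {ι : Type*} [Fintype ι] {Ω : ι → Type*} [∀ i, MeasurableSpace (Ω i)]
  {μ : ∀ i, Measure (Ω i)} [∀ i, IsProbabilityMeasure (μ i)] {B : ∀ i, Set (Ω i)} {q : ℝ}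

theorem measureReal_pi_forall_mem_le_pow (hB : ∀ i, (μ i).real (B i) ≤ q) (S : Finset ι) :
    (Measure.pi μ).real {x | ∀ i ∈ S, x i ∈ B i} ≤ q ^ #S := by
  have : {x | ∀ i ∈ S, x i ∈ B i} = Set.pi S B := rfl
  rw [this, measureReal_def, Measure.pi_pi_finset, ENNReal.toReal_prod]
  exact (Finset.prod_le_prod (fun _ _ => measureReal_nonneg) fun i _ => hB i).trans_eq
    (Finset.prod_const q)

theorem measureReal_pi_le_ncard_le_choose_mul_pow (hB : ∀ i, (μ i).real (B i) ≤ q) (m : ℕ) :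
    (Measure.pi μ).real {x | m ≤ {i | x i ∈ B i}.ncard} ≤ (Fintype.card ι).choose m * q ^ m := by
  classical
  have subset : {x | m ≤ {i | x i ∈ B i}.ncard} ⊆
      ⋃ S ∈ Finset.univ.powersetCard m, {x : ∀ i, Ω i | ∀ i ∈ S, x i ∈ B i} := by
    intro x hx
    rw [Set.mem_ofPred_eq, Set.ncard_eq_toFinset_card'] at hx
    obtain ⟨S, hS, card_S⟩ := Finset.exists_subset_card_eq hx
    simp only [Set.mem_iUnion]
    exact ⟨S, by simpa using card_S, fun i hi => by simpa using hS hi⟩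
  calc
    (Measure.pi μ).real {x | m ≤ {i | x i ∈ B i}.ncard}
      ≤ (Measure.pi μ).real
          (⋃ S ∈ Finset.univ.powersetCard m, {x : ∀ i, Ω i | ∀ i ∈ S, x i ∈ B i}) :=
      measureReal_mono subset (measure_ne_top _ _)
    _ ≤ ∑ S ∈ Finset.univ.powersetCard m, (Measure.pi μ).real {x | ∀ i ∈ S, x i ∈ B i} :=
      measureReal_biUnion_finset_le _ _
    _ ≤ ∑ _ ∈ (Finset.univ : Finset ι).powersetCard m, q ^ m := by
      gcongr with _ hS
      rw [← (Finset.mem_powersetCard.1 hS).2]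
      exact measureReal_pi_forall_mem_le_pow hB _
    _ = (Fintype.card ι).choose m * q ^ m := by simp

end ProductMeasure

theorem tendsto_measure_nhds_one_of_measureReal_compl_le {α : Type*} {l : Filter α}
    {Ω : α → Type*} [∀ a, MeasurableSpace (Ω a)] {μ : ∀ a, Measure (Ω a)} {s : ∀ a, Set (Ω a)}
    {u : α → ℝ} (hμ : ∀ᶠ a in l, IsProbabilityMeasure (μ a)) (hs : ∀ a, MeasurableSet (s a))
    (hsu : ∀ᶠ a in l, (μ a).real (s a)ᶜ ≤ u a) (hu : Tendsto u l (nhds 0)) :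
    Tendsto (fun a => μ a (s a)) l (nhds 1) := by
  have lower_tendsto : Tendsto (fun a => ENNReal.ofReal (1 - u a)) l (nhds 1) := by
    simpa using ENNReal.tendsto_ofReal (hu.const_sub 1)
  refine tendsto_of_tendsto_of_tendsto_of_le_of_le' lower_tendsto tendsto_const_nhds ?_
    (hμ.mono fun a _ => prob_le_one)
  filter_upwards [hμ, hsu] with a _ compl_le
  rw [probReal_compl_eq_one_sub (hs a)] at compl_le
  rw [← ofReal_measureReal]
  exact ENNReal.ofReal_le_ofReal (by linarith)

section Defect

variable {n : ℕ}

/-- The weight that an arc from `v` to `w` contributes to the defect of `v`: `1` if `w` has the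
colour of `v`, `-1` otherwise, and `0` for the ignored diagonal entry `w = v`. -/
def defectWeight (c : Fin n → Bool) (v w : Fin n) : ℤ :=
  if w = v then 0 else if c w = c v then 1 else -1

theorem abs_defectWeight_of_ne (c : Fin n → Bool) {v w : Fin n} (h : w ≠ v) :
    |defectWeight c v w| = 1 := by
  rw [defectWeight, if_neg h]
  split_ifs <;> simp

theorem ncard_sub_ncard_eq_selectedSum (A : Fin n → Fin n → Bool) (c : Fin n → Bool)
    (v : Fin n) :
    (({w | DiAdj A v w ∧ c w = c v} : Set (Fin n)).ncard : ℤ) -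
        ({w | DiAdj A v w ∧ c w ≠ c v} : Set (Fin n)).ncard =
      selectedSum (defectWeight c v) (A v) := by
  classical
  rw [Set.ncard_eq_toFinset_card', Set.ncard_eq_toFinset_card', Set.toFinset_ofPred,
    Set.toFinset_ofPred, Finset.natCast_card_filter, Finset.natCast_card_filter,
    ← Finset.sum_sub_distrib, selectedSum]
  refine Finset.sum_congr rfl fun w _ => ?_
  rcases eq_or_ne w v with rfl | hwv
  · simp [DiAdj, defectWeight]
  · by_cases hA : A v w <;> by_cases hc : c w = c v <;>
      simp [DiAdj, defectWeight, hwv, hwv.symm, hA, hc]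

theorem defectAt_eq_selectedSum_of_pos {A : Fin n → Fin n → Bool} {c : Fin n → Bool} {v : Fin n}
    (h : 0 < defectAt A c v) : defectAt A c v = selectedSum (defectWeight c v) (A v) := by
  have not_majority : ¬ MajorityAt A c v := fun hm => by simp [defectAt, hm] at h
  rw [defectAt, if_neg not_majority, ncard_sub_ncard_eq_selectedSum]

/-- The vertices whose defect lies in `(0, x]`. -/
def lowDefectVertices (A : Fin n → Fin n → Bool) (c : Fin n → Bool) (x : ℝ) : Set (Fin n) :=
  {v | 0 < defectAt A c v ∧ (defectAt A c v : ℝ) ≤ x}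

theorem lowDefectVertices_mono (A : Fin n → Fin n → Bool) (c : Fin n → Bool) :
    Monotone (lowDefectVertices A c) :=
  fun _ _ hxy _ hv => ⟨hv.1, hv.2.trans hxy⟩

/-- The possible rows of `v` whose weighted sum lies in `(0, x]`. This event depends on row `v`
only, so these events are independent over `v`. -/
def lowDefectRows (c : Fin n → Bool) (v : Fin n) (x : ℝ) : Set (Fin n → Bool) :=
  {f | 0 < selectedSum (defectWeight c v) f ∧ (selectedSum (defectWeight c v) f : ℝ) ≤ x}

theorem lowDefectVertices_subset (A : Fin n → Fin n → Bool) (c : Fin n → Bool) (x : ℝ) :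
    lowDefectVertices A c x ⊆ {v | A v ∈ lowDefectRows c v x} := by
  intro v hv
  have defect_eq := defectAt_eq_selectedSum_of_pos hv.1
  exact ⟨defect_eq ▸ hv.1, defect_eq ▸ hv.2⟩

end Defect

section RandomDigraph

variable {n : ℕ} {d : ℝ}

theorem isProbabilityMeasure_diMeasure {p : ℝ} (hp : p ∈ Set.Icc 0 1) :
    IsProbabilityMeasure (diMeasure n p) := by
  have := isProbabilityMeasure_bernoulliM hp
  unfold diMeasure
  infer_instance

theorem div_mem_Icc_of_min_nonneg (hd : 0 ≤ min d (n - d)) : d / n ∈ Set.Icc (0 : ℝ) 1 := by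
  obtain ⟨d_nonneg, gap_nonneg⟩ := le_min_iff.1 hd
  exact unitInterval.div_mem d_nonneg n.cast_nonneg (by linarith)

theorem min_div_four_le_variance (hd : 1 ≤ min d (n - d)) :
    min d (n - d) / 4 ≤ (n - 1) * (d / n * (1 - d / n)) := by
  obtain ⟨one_le_d, one_le_gap⟩ := le_min_iff.1 hd
  have p_mem := div_mem_Icc_of_min_nonneg (zero_le_one.trans hd)
  have n_ge_two : (2 : ℝ) ≤ n := by linarith
  have min_mul_le : min d (n - d) * n ≤ 2 * (d * (n - d)) := by
    rcases min_cases d (n - d) with ⟨h, _⟩ | ⟨h, _⟩ <;> rw [h] <;> nlinarith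
  calc
    min d (n - d) / 4 = min d (n - d) * n / (4 * n) := by field_simp
    _ ≤ 2 * (d * (n - d)) / (4 * n) := by gcongr
    _ = n / 2 * (d / n * (1 - d / n)) := by field_simp; ring
    _ ≤ (n - 1) * (d / n * (1 - d / n)) := by
      gcongr ?_ * _
      · exact mul_nonneg p_mem.1 (sub_nonneg.2 p_mem.2)
      · linarith

theorem measureReal_lowDefectRows_le (hd : 1 ≤ min d (n - d)) {ε : ℝ} (hε : 0 ≤ ε)
    (c : Fin n → Bool) (v : Fin n) :
    (Measure.pi fun _ : Fin n => bernoulliM (d / n)).real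
      (lowDefectRows c v (ε * √(min d (n - d)))) ≤ 2 * ε := by
  set D := min d (n - d)
  set variance := ∑ i ∈ Finset.univ.erase v, d / n * (1 - d / n) with variance_def
  have le_variance : D / 4 ≤ variance := by
    have := min_div_four_le_variance hd
    rwa [variance_def, Finset.sum_const, Finset.card_erase_of_mem (Finset.mem_univ v),
      Finset.card_univ, Fintype.card_fin, nsmul_eq_mul, Nat.cast_pred v.pos]
  have D_pos : 0 < D := by linarith
  have point_le (k : ℤ) : (Measure.pi fun _ : Fin n => bernoulliM (d / n)).real
      {f | selectedSum (defectWeight c v) f = k} ≤ 2 / √D := calc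
    _ ≤ √(π / (8 * variance)) := measureReal_selectedSum_eq_le
      (fun _ => div_mem_Icc_of_min_nonneg (zero_le_one.trans hd))
      (fun w hw => abs_defectWeight_of_ne c (Finset.ne_of_mem_erase hw)) (by linarith) k
    _ ≤ √(4 / D) := by
      refine Real.sqrt_le_sqrt ?_
      rw [div_le_div_iff₀ (by linarith) D_pos]
      nlinarith [Real.pi_le_four]
    _ = 2 / √D := by rw [Real.sqrt_div (by norm_num)]; norm_num
  refine (measureReal_pos_and_le_le_mul point_le (by positivity)).trans_eq ?_
  field_simp

theorem measureReal_exists_le_ncard_lowDefectVertices_le (hd : 1 ≤ min d (n - d)) {ε : ℝ}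
    (hε : 0 ≤ ε) (m : ℕ) :
    (diMeasure n (d / n)).real
        {A | ∃ c, m ≤ (lowDefectVertices A c (ε * √(min d (n - d)))).ncard} ≤
      4 ^ n * (2 * ε) ^ m := by
  have p_mem := div_mem_Icc_of_min_nonneg (zero_le_one.trans hd)
  have := isProbabilityMeasure_bernoulliM p_mem
  have := isProbabilityMeasure_diMeasure (n := n) p_mem
  set x := ε * √(min d (n - d))
  have subset : {A | ∃ c, m ≤ (lowDefectVertices A c x).ncard} ⊆
      ⋃ c, {A : Fin n → Fin n → Bool | m ≤ {v | A v ∈ lowDefectRows c v x}.ncard} := by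
    rintro A ⟨c, hc⟩
    exact Set.mem_iUnion.2 ⟨c, hc.trans (Set.ncard_le_ncard (lowDefectVertices_subset A c x))⟩
  calc
    _ ≤ (diMeasure n (d / n)).real
          (⋃ c, {A | m ≤ {v | A v ∈ lowDefectRows c v x}.ncard}) := measureReal_mono subset
    _ ≤ ∑ c, (diMeasure n (d / n)).real {A | m ≤ {v | A v ∈ lowDefectRows c v x}.ncard} :=
      measureReal_iUnion_fintype_le _
    _ ≤ ∑ _ : Fin n → Bool, n.choose m * (2 * ε) ^ m := by
      gcongr with c
      exact (measureReal_pi_le_ncard_le_choose_mul_pow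
        (measureReal_lowDefectRows_le hd hε c) m).trans_eq (by simp)
    _ = 2 ^ n * (n.choose m * (2 * ε) ^ m) := by simp
    _ ≤ 2 ^ n * (2 ^ n * (2 * ε) ^ m) := by
      gcongr
      exact_mod_cast n.choose_le_two_pow m
    _ = 4 ^ n * (2 * ε) ^ m := by
      rw [← mul_assoc, ← mul_pow]
      norm_num

theorem measureReal_exists_mul_lt_ncard_lowDefectVertices_le (hd : 1 ≤ min d (n - d)) {δ : ℝ}
    (hδ : 0 < δ) {x : ℝ} (hx : x ≤ (1 / 8 : ℝ) ^ δ⁻¹ / 2) :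
    (diMeasure n (d / n)).real
        {A | ∃ c, δ * n < (lowDefectVertices A c (x * √(min d (n - d)))).ncard} ≤
      (1 / 2) ^ n := by
  have := isProbabilityMeasure_diMeasure (n := n) (div_mem_Icc_of_min_nonneg (zero_le_one.trans hd))
  have le_div_ceil : (n : ℝ) ≤ δ⁻¹ * ⌈δ * n⌉₊ := by
    rw [inv_mul_eq_div, le_div_iff₀ hδ, mul_comm]
    exact Nat.le_ceil _
  calc
    _ ≤ (diMeasure n (d / n)).real {A | ∃ c, ⌈δ * n⌉₊ ≤
          (lowDefectVertices A c ((1 / 8 : ℝ) ^ δ⁻¹ / 2 * √(min d (n - d)))).ncard} := by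
      refine measureReal_mono fun A ⟨c, hc⟩ => ⟨c, (Nat.ceil_le.2 hc.le).trans ?_⟩
      exact Set.ncard_le_ncard (lowDefectVertices_mono A c (by gcongr))
    _ ≤ 4 ^ n * (2 * ((1 / 8 : ℝ) ^ δ⁻¹ / 2)) ^ ⌈δ * n⌉₊ :=
      measureReal_exists_le_ncard_lowDefectVertices_le hd (by positivity) _
    _ = 4 ^ n * (1 / 8 : ℝ) ^ (δ⁻¹ * ⌈δ * n⌉₊) := by
      rw [mul_div_cancel₀ _ two_ne_zero, Real.rpow_mul_natCast (by norm_num)]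
    _ ≤ 4 ^ n * (1 / 8 : ℝ) ^ (n : ℝ) := by
      gcongr 4 ^ n * ?_
      exact Real.rpow_le_rpow_of_exponent_ge (by norm_num) (by norm_num) le_div_ceil
    _ = (1 / 2) ^ n := by
      rw [Real.rpow_natCast, ← mul_pow]
      norm_num

theorem eventually_isProbabilityMeasure_diMeasure {d : ℕ → ℝ}
    (hd : Tendsto (fun n : ℕ => min (d n) (n - d n)) atTop atTop) :
    ∀ᶠ n in atTop, IsProbabilityMeasure (diMeasure n (d n / n)) :=
  (hd.eventually_ge_atTop 0).mono fun _ h =>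
    isProbabilityMeasure_diMeasure (div_mem_Icc_of_min_nonneg h)

theorem whp_few_low_defect_vertices_general (d : ℕ → ℝ) (eps : ℕ → ℝ)
    (heps : Tendsto eps atTop (nhds 0))
    (hd : Tendsto (fun n : ℕ => min (d n) ((n : ℝ) - d n)) atTop atTop)
    (δ : ℝ) (hδ : 0 < δ) :
    Tendsto (fun n => diMeasure n (d n / n)
        {A | ∀ c : Fin n → Bool,
          (lowDefectVertices A c (eps n * √(min (d n) (n - d n)))).ncard ≤ δ * n})
      atTop (nhds 1) := by
  refine tendsto_measure_nhds_one_of_measureReal_compl_le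
    (eventually_isProbabilityMeasure_diMeasure hd) (fun n => (Set.toFinite _).measurableSet) ?_
    (tendsto_pow_atTop_nhds_zero_of_lt_one (r := (1 / 2 : ℝ)) (by norm_num) (by norm_num))
  have threshold_pos : 0 < (1 / 8 : ℝ) ^ δ⁻¹ / 2 := by positivity
  filter_upwards [hd.eventually_ge_atTop 1, heps.eventually_le_const threshold_pos] with n hdn hen
  simpa [Set.compl_ofPred] using measureReal_exists_mul_lt_ncard_lowDefectVertices_le hdn hδ hen

end RandomDigraph

/-- If `εₙ → 0` and `d*ₙ := min(dₙ, n−dₙ) → ∞`, then for every `δ > 0`, whp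
`D ~ 𝔻(n, dₙ/n)` is such that in every bisection there are at most `δ·n` vertices whose
defect lies in `(0, εₙ·√(d*ₙ)]`. -/
theorem whp_few_low_defect_vertices (d : ℕ → ℝ) (eps : ℕ → ℝ)
    (heps : Tendsto eps atTop (nhds 0))
    (hd : Tendsto (fun n : ℕ => min (d n) ((n : ℝ) - d n)) atTop atTop)
    (δ : ℝ) (hδ : 0 < δ) :
    Tendsto (fun n => diMeasure n (d n / n)
        {A | ∀ c : Fin n → Bool, IsBisection c →
          ((({v | 0 < defectAt A c v ∧
              (defectAt A c v : ℝ) ≤ eps n * Real.sqrt (min (d n) ((n : ℝ) - d n))} :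
            Set (Fin n)).ncard : ℝ)) ≤ δ * n})
      atTop (nhds 1) := by
  exact tendsto_of_tendsto_of_tendsto_of_le_of_le'
    (whp_few_low_defect_vertices_general d eps heps hd δ hδ) tendsto_const_nhds
    (.of_forall fun _ => measure_mono fun _ hA c _ => hA c)
    ((eventually_isProbabilityMeasure_diMeasure hd).mono fun _ _ => prob_le_one)
end

section
/- For every odd integer d with 3 ≤ d ≤ 27 and every f ∈ [0, 1/3], the second derivative satisfies Q_d''(f) ≤ 0. -/
/-- The polynomial `Q_d`: the probability that a given colour "overtakes" as the
majority colour among `d` independently uniformly 3-coloured vertices, when each vertex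
is independently recoloured (to a uniformly random different colour) with probability
`f`. -/
noncomputable def Q (d : ℕ) (f : ℝ) : ℝ :=
  ∑ i ∈ Finset.Icc 1 (d / 2),
    (Nat.choose d i : ℝ) * (1 / 3 : ℝ) ^ i * (2 / 3 : ℝ) ^ (d - i) *
      ∑ j ∈ Finset.Icc (d / 2 + 1) d, ∑ k ∈ Finset.range (i + 1),
        (Nat.choose i k : ℝ) * f ^ k * (1 - f) ^ (i - k) *
          (Nat.choose (d - i) (j + k - i) : ℝ) * (f / 2) ^ (j + k - i) *
          (1 - f / 2) ^ (d - j - k)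

/-!
Let `X` be the number of vertices of the given colour before the recolouring and `Y` the number
after it. Their joint generating function is the `d`-th power of
`(1/3 s + 2/3) (1/3 t + 2/3) + (2/9) ρ (s - 1) (t - 1)`, where `ρ = 1 - 3f/2` is the correlation of
the colour indicators of one vertex before and after. Expanding this power diagonalises the joint
law in Krawtchouk functions, so `P(X ≤ t, Y ≤ t)` is a polynomial in `ρ` with coefficients
(binomial weight) × (square), hence convex in `ρ ≥ 0`, and
`P(X ≤ t < Y) = P(X ≤ t) - P(X ≤ t, Y ≤ t)` is concave. Passing from it to `Q_d` removes the part
`X = 0`, which is `(2/3)^d` times a binomial tail at success probability `f/2`. With `t = ⌊d/2⌋`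
this tail is convex for `f/2 ≤ 1/2`, so removing it preserves concavity.
-/

section CoefficientExtraction

open Polynomial Finset

variable {R : Type*} [CommSemiring R]

theorem coeff_C_add_C_mul_X_pow (a b : R) (n j : ℕ) :
    ((C a + C b * X) ^ n).coeff j = n.choose j * b ^ j * a ^ (n - j) := by
  have h_scale : (C a + C b * X : R[X]) = (X + C a).comp (C b * X) := by simp [add_comm]
  rw [h_scale, ← pow_comp, comp_C_mul_X_coeff, coeff_X_add_C_pow]
  ring

theorem coeff_C_add_C_mul_X_pow_mul (a b : R) (g : R[X]) {i j : ℕ} (hij : i ≤ j) :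
    ((C a + C b * X) ^ i * g).coeff j =
      ∑ k ∈ range (i + 1), i.choose k * a ^ k * b ^ (i - k) * g.coeff (j + k - i) := by
  rw [add_pow, sum_mul, finsetSum_coeff]
  refine sum_congr rfl fun k hk => ?_
  have hki : k ≤ i := Nat.lt_succ_iff.mp (mem_range.mp hk)
  have h_monomial : C a ^ k * (C b * X) ^ (i - k) * (i.choose k : R[X]) * g =
      C (i.choose k * a ^ k * b ^ (i - k)) * (g * X ^ (i - k)) := by
    simp only [C_mul, C_pow, C_eq_natCast]
    ring
  rw [h_monomial, coeff_C_mul, coeff_mul_X_pow', if_pos (by lia),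
    show j - (i - k) = j + k - i by lia]

end CoefficientExtraction

section NoisyCount

open Polynomial Finset

variable {R : Type*} [CommRing R]

/-- The generating polynomial `∑ᵢ Kₖ(i) xⁱ` of the `k`-th Krawtchouk function of the binomial law
with parameters `n` and `p`, weighted by that law and without normalisation. -/
noncomputable def krawtchouk (p : R) (n k : ℕ) : R[X] :=
  (X - 1) ^ k * (C (1 - p) + C p * X) ^ (n - k)

/-- For `n` independent Bernoulli(`p`) bits, each kept with probability `ρ` and otherwise resampled,
`noisyCount p ρ n i` is `∑ⱼ P(i bits are 1 before, j bits are 1 after) xʲ`. A bit `1` becomes `0`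
with probability `(1 - p) (1 - ρ)`, and a bit `0` becomes `1` with probability `p (1 - ρ)`. -/
noncomputable def noisyCount (p ρ : R) (n i : ℕ) : R[X] :=
  C (n.choose i * p ^ i * (1 - p) ^ (n - i)) *
    ((C ((1 - p) * (1 - ρ)) + C (1 - (1 - p) * (1 - ρ)) * X) ^ i *
      (C (1 - p * (1 - ρ)) + C (p * (1 - ρ)) * X) ^ (n - i))

theorem noisyCount_eq_sum_krawtchouk (p ρ : R) (n i : ℕ) :
    noisyCount p ρ n i = ∑ k ∈ range (n + 1),
      C (n.choose k * (p * (1 - p) * ρ) ^ k * (krawtchouk p n k).coeff i) * krawtchouk p n k := by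
  -- The inner variable of `R[X][X]` counts the bits after the noise, the outer one those before.
  let bitGen : R[X] := C (1 - p) + C p * X
  let zeroGen : R[X] := C (1 - p) * (C (1 - p * (1 - ρ)) + C (p * (1 - ρ)) * X)
  let oneGen : R[X] := C p * (C ((1 - p) * (1 - ρ)) + C (1 - (1 - p) * (1 - ρ)) * X)
  have h_joint : (C zeroGen + C oneGen * X : R[X][X]) =
      C (C (p * (1 - p) * ρ) * (X - 1)) * (X - 1 : R[X]).map C + C bitGen * bitGen.map C := by
    simp only [zeroGen, oneGen, bitGen, Polynomial.map_add, Polynomial.map_sub, Polynomial.map_mul,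
      map_C, map_X, Polynomial.map_one, C_add, C_sub, C_mul, C_1]
    ring
  have h_gen : noisyCount p ρ n i = ((C zeroGen + C oneGen * X : R[X][X]) ^ n).coeff i := by
    rw [coeff_C_add_C_mul_X_pow, noisyCount]
    simp only [zeroGen, oneGen, mul_pow, C_mul, C_pow, C_eq_natCast]
    ring
  rw [h_gen, h_joint, add_pow, finsetSum_coeff]
  refine sum_congr rfl fun k _ => ?_
  have h_term : (C (C (p * (1 - p) * ρ) * (X - 1)) * (X - 1 : R[X]).map C) ^ k *
        (C bitGen * bitGen.map C) ^ (n - k) * (n.choose k : R[X][X]) =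
      C (C (n.choose k * (p * (1 - p) * ρ) ^ k) * krawtchouk p n k) *
        (krawtchouk p n k).map C := by
    simp only [krawtchouk, bitGen, mul_pow, Polynomial.map_mul, Polynomial.map_pow, C_mul, C_pow,
      C_eq_natCast]
    ring
  rw [h_term, coeff_C_mul, coeff_map, C_mul, C_mul, C_mul]
  ring

/-- The sum of the weighted `k`-th Krawtchouk function over `{0, …, t}`; for `k = 0` it is the
binomial probability of at most `t` successes. -/
noncomputable def krawtchoukSum (p : R) (n t k : ℕ) : R :=
  ∑ i ∈ range (t + 1), (krawtchouk p n k).coeff i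

theorem natDegree_krawtchouk_le (p : R) {n k : ℕ} (hk : k ≤ n) :
    (krawtchouk p n k).natDegree ≤ n := by
  calc (krawtchouk p n k).natDegree
    _ ≤ k * 1 + (n - k) * 1 :=
      natDegree_mul_le_of_le (natDegree_pow_le_of_le k (by compute_degree))
        (natDegree_pow_le_of_le (n - k) (by compute_degree))
    _ = n := by lia

theorem eval_one_krawtchouk (p : R) (n k : ℕ) : (krawtchouk p n k).eval 1 = 0 ^ k := by
  simp [krawtchouk]

theorem sum_Icc_coeff_krawtchouk (p : R) {n t k : ℕ} (ht : t ≤ n) (hk : k ≤ n) :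
    ∑ j ∈ Icc (t + 1) n, (krawtchouk p n k).coeff j = 0 ^ k - krawtchoukSum p n t k := by
  have h_total : ∑ j ∈ range (n + 1), (krawtchouk p n k).coeff j = 0 ^ k := by
    rw [← eval_one_krawtchouk p n k,
      eval_eq_sum_range' (Nat.lt_succ_of_le (natDegree_krawtchouk_le p hk))]
    simp
  rw [eq_sub_iff_add_eq', ← h_total, krawtchoukSum, ← Ico_add_one_right_eq_Icc,
    sum_range_add_sum_Ico _ (by lia)]

/-- The probability, as a polynomial in the correlation `ρ`, that at most `t` of `n` Bernoulli(`p`)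
bits are `1` both before and after the noise of `noisyCount p ρ n`; it is written in its Krawtchouk
expansion, which makes the signs of the coefficients visible. -/
noncomputable def noiseStability (p : R) (n t : ℕ) : R[X] :=
  ∑ k ∈ range (n + 1), C (n.choose k * (p * (1 - p)) ^ k * krawtchoukSum p n t k ^ 2) * X ^ k

theorem sum_coeff_noisyCount_crossing (p ρ : R) {n t : ℕ} (ht : t ≤ n) :
    ∑ i ∈ range (t + 1), ∑ j ∈ Icc (t + 1) n, (noisyCount p ρ n i).coeff j =
      krawtchoukSum p n t 0 - (noiseStability p n t).eval ρ := by
  let weight (k : ℕ) : R := n.choose k * (p * (1 - p) * ρ) ^ k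
  calc ∑ i ∈ range (t + 1), ∑ j ∈ Icc (t + 1) n, (noisyCount p ρ n i).coeff j
    _ = ∑ k ∈ range (n + 1), weight k * (krawtchoukSum p n t k *
          ∑ j ∈ Icc (t + 1) n, (krawtchouk p n k).coeff j) := by
      simp only [noisyCount_eq_sum_krawtchouk, finsetSum_coeff, coeff_C_mul]
      rw [sum_comm_cycle]
      refine sum_congr rfl fun k _ => ?_
      rw [krawtchoukSum, sum_mul_sum, mul_sum]
      refine sum_congr rfl fun i _ => ?_
      rw [mul_sum]
      exact sum_congr rfl fun j _ => by ring
    _ = ∑ k ∈ range (n + 1), (weight k * krawtchoukSum p n t k * 0 ^ k -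
          weight k * krawtchoukSum p n t k ^ 2) := by
      refine sum_congr rfl fun k hk => ?_
      rw [sum_Icc_coeff_krawtchouk p ht (Nat.lt_succ_iff.mp (mem_range.mp hk))]
      ring
    _ = krawtchoukSum p n t 0 - (noiseStability p n t).eval ρ := by
      rw [sum_sub_distrib, sum_range_succ', noiseStability, eval_finsetSum]
      congr 1
      · simp [weight]
      · refine sum_congr rfl fun k _ => ?_
        simp only [weight, eval_mul, eval_C, eval_pow, eval_X, mul_pow _ ρ]
        ring

end NoisyCount

section BinomialTail

open Polynomial Finset

/-- The probability that more than `t` of `n` independent trials succeed, as a polynomial in the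
success probability. -/
noncomputable def binomialTail (R : Type*) [CommRing R] (n t : ℕ) : R[X] :=
  ∑ j ∈ Icc (t + 1) n, bernsteinPolynomial R n j

variable {R : Type*} [CommRing R]

theorem sum_coeff_noisyCount_zero (p ρ : R) (n t : ℕ) :
    ∑ j ∈ Icc (t + 1) n, (noisyCount p ρ n 0).coeff j =
      (1 - p) ^ n * (binomialTail R n t).eval (p * (1 - ρ)) := by
  simp [noisyCount, binomialTail, bernsteinPolynomial, coeff_C_mul,
    coeff_C_add_C_mul_X_pow, eval_finsetSum, mul_sum, -map_mul, -map_sub, -map_pow]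

theorem sum_coeff_noisyCount_crossing_of_pos (p ρ : R) {n t : ℕ} (ht : t ≤ n) :
    ∑ i ∈ Icc 1 t, ∑ j ∈ Icc (t + 1) n, (noisyCount p ρ n i).coeff j =
      krawtchoukSum p n t 0 - (noiseStability p n t).eval ρ -
        (1 - p) ^ n * (binomialTail R n t).eval (p * (1 - ρ)) := by
  rw [← sum_coeff_noisyCount_crossing p ρ ht, ← sum_coeff_noisyCount_zero, eq_sub_iff_add_eq',
    range_eq_Ico, sum_eq_sum_Ico_succ_bot t.succ_pos, Nat.succ_eq_add_one, zero_add,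
    Ico_add_one_right_eq_Icc]

theorem derivative_binomialTail (n t : ℕ) :
    derivative (binomialTail R n t) = n * bernsteinPolynomial R (n - 1) t := by
  rcases le_or_gt n t with hnt | htn
  · rcases n.eq_zero_or_pos with rfl | hn
    · simp [binomialTail]
    · simp [binomialTail, Icc_eq_empty_of_lt (Nat.lt_succ_of_le hnt),
        bernsteinPolynomial.eq_zero_of_lt R (show n - 1 < t by lia)]
  · rw [binomialTail, derivative_sum, ← Ico_add_one_right_eq_Icc, ← sum_Ico_add']
    simp only [bernsteinPolynomial.derivative_succ, ← mul_sum]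
    rw [← neg_inj, ← mul_neg, ← sum_neg_distrib]
    simp only [neg_sub]
    rw [sum_Ico_sub _ htn.le, bernsteinPolynomial.eq_zero_of_lt R (show n - 1 < n by lia)]
    ring

end BinomialTail

section Convexity

open Polynomial Finset

theorem eval_derivative_derivative_noiseStability_nonneg {p ρ : ℝ} (hp₀ : 0 ≤ p) (hp₁ : p ≤ 1)
    (hρ : 0 ≤ ρ) (n t : ℕ) :
    0 ≤ (derivative (derivative (noiseStability p n t))).eval ρ := by
  have : 0 ≤ p * (1 - p) := mul_nonneg hp₀ (sub_nonneg.mpr hp₁)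
  simp only [noiseStability, derivative_sum, derivative_C_mul_X_pow, eval_finsetSum, eval_mul,
    eval_C, eval_pow, eval_X]
  positivity

theorem eval_derivative_bernsteinPolynomial_nonneg {m t : ℕ} (hmt : m ≤ 2 * t) {x : ℝ}
    (hx₀ : 0 ≤ x) (hx₁ : x ≤ 1 / 2) :
    0 ≤ (derivative (bernsteinPolynomial ℝ m t)).eval x := by
  rcases lt_or_ge m t with hlt | hle
  · simp [bernsteinPolynomial.eq_zero_of_lt ℝ hlt]
  -- Below `1/2` both `x (1 - x)` and `x` increase.
  have h_factor : bernsteinPolynomial ℝ m t =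
      C (m.choose t : ℝ) * ((X * (1 - X)) ^ (m - t) * X ^ (2 * t - m)) := by
    have h_split : t = (m - t) + (2 * t - m) := by lia
    rw [bernsteinPolynomial, C_eq_natCast, mul_pow, mul_right_comm (X ^ _), ← pow_add, ← h_split]
    ring
  have h₁ : 0 ≤ 1 - x := by linarith
  have h₂ : 0 ≤ 1 - 2 * x := by linarith
  have h_eval : (derivative (bernsteinPolynomial ℝ m t)).eval x = m.choose t *
      ((m - t : ℕ) * (x * (1 - x)) ^ (m - t - 1) * (1 - 2 * x) * x ^ (2 * t - m) +
        (x * (1 - x)) ^ (m - t) * ((2 * t - m : ℕ) * x ^ (2 * t - m - 1))) := by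
    simp only [h_factor, derivative_mul, derivative_C, derivative_pow, derivative_X,
      derivative_sub, derivative_one, eval_add, eval_sub, eval_mul, eval_pow, eval_C, eval_X,
      eval_zero, eval_one]
    ring
  rw [h_eval]
  positivity

theorem eval_derivative_derivative_binomialTail_nonneg {n t : ℕ} (hnt : n ≤ 2 * t + 1) {x : ℝ}
    (hx₀ : 0 ≤ x) (hx₁ : x ≤ 1 / 2) :
    0 ≤ (derivative (derivative (binomialTail ℝ n t))).eval x := by
  rw [derivative_binomialTail, derivative_natCast_mul, eval_natCast_mul]
  exact mul_nonneg n.cast_nonneg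
    (eval_derivative_bernsteinPolynomial_nonneg (by lia) hx₀ hx₁)

theorem deriv_deriv_eval {𝕜 : Type*} [NontriviallyNormedField 𝕜] (P : 𝕜[X]) (x : 𝕜) :
    deriv (deriv fun y => P.eval y) x = (derivative (derivative P)).eval x := by
  rw [show deriv (fun y => P.eval y) = fun y => (derivative P).eval y from funext fun _ => P.deriv,
    Polynomial.deriv]

theorem Q_eq_sum_coeff_noisyCount (d : ℕ) (f : ℝ) :
    Q d f = ∑ i ∈ Icc 1 (d / 2), ∑ j ∈ Icc (d / 2 + 1) d,
      (noisyCount (1 / 3) (1 - 3 / 2 * f) d i).coeff j := by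
  refine sum_congr rfl fun i hi => ?_
  rw [mul_sum]
  refine sum_congr rfl fun j hj => ?_
  have hij : i ≤ j := by grind
  have h_recolour_from : (1 - 1 / 3 : ℝ) * (1 - (1 - 3 / 2 * f)) = f := by ring
  have h_recolour_to : (1 / 3 : ℝ) * (1 - (1 - 3 / 2 * f)) = f / 2 := by ring
  rw [noisyCount, coeff_C_mul, coeff_C_add_C_mul_X_pow_mul _ _ _ hij, h_recolour_from,
    h_recolour_to, show (1 - 1 / 3 : ℝ) = 2 / 3 by norm_num]
  congr 1
  refine sum_congr rfl fun k _ => ?_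
  rw [coeff_C_add_C_mul_X_pow, show d - i - (j + k - i) = d - j - k by lia]
  ring

theorem Q_eq_eval (d : ℕ) :
    Q d = fun f => (C (krawtchoukSum (1 / 3) d (d / 2) 0) -
      (noiseStability (1 / 3) d (d / 2)).comp (1 - C (3 / 2) * X) -
        C ((2 / 3) ^ d) * (binomialTail ℝ d (d / 2)).comp (C (1 / 2) * X)).eval f := by
  funext f
  rw [Q_eq_sum_coeff_noisyCount, sum_coeff_noisyCount_crossing_of_pos _ _ (Nat.div_le_self d 2)]
  simp only [eval_sub, eval_C, eval_comp, eval_one, eval_mul, eval_X]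
  congr 3 <;> ring

theorem deriv_deriv_Q (d : ℕ) (f : ℝ) :
    deriv (deriv (Q d)) f =
      -(9 / 4 * (derivative (derivative (noiseStability (1 / 3) d (d / 2)))).eval (1 - 3 / 2 * f) +
        (2 / 3) ^ d / 4 * (derivative (derivative (binomialTail ℝ d (d / 2)))).eval (f / 2)) := by
  rw [Q_eq_eval, deriv_deriv_eval]
  simp only [derivative_add, derivative_sub, derivative_mul, derivative_comp, derivative_C,
    derivative_X, derivative_one, derivative_zero, eval_sub, eval_add, eval_mul, eval_comp, eval_C,
    eval_X, eval_one, eval_zero]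
  rw [show f / 2 = 1 / 2 * f by ring]
  ring

end Convexity

theorem Q_second_deriv_nonpos_general (d : ℕ) {f : ℝ} (hf : f ∈ Set.Icc (0 : ℝ) (2 / 3)) :
    deriv (deriv (Q d)) f ≤ 0 := by
  obtain ⟨hf₀, hf₁⟩ := hf
  have h_stability := eval_derivative_derivative_noiseStability_nonneg (p := 1 / 3)
    (ρ := 1 - 3 / 2 * f) (by norm_num) (by norm_num) (by linarith) d (d / 2)
  have h_tail := eval_derivative_derivative_binomialTail_nonneg (n := d) (t := d / 2) (by lia)
    (x := f / 2) (by linarith) (by linarith)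
  rw [deriv_deriv_Q, neg_nonpos]
  positivity

/-- For every odd `3 ≤ d ≤ 27` and `f ∈ [0, 1/3]`, the polynomial `Q_d` is concave:
`Q_d''(f) ≤ 0`. -/
theorem Q_second_deriv_nonpos (d : ℕ) (hodd : Odd d) (h3 : 3 ≤ d) (h27 : d ≤ 27)
    (f : ℝ) (hf : f ∈ Set.Icc (0 : ℝ) (1 / 3)) :
    deriv (deriv (Q d)) f ≤ 0 :=
  Q_second_deriv_nonpos_general d ⟨hf.1, hf.2.trans (by norm_num)⟩
end
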